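/- Let g: ℝ → ℝ be a smooth Morse function (every zero of g' is not a zero of g'') whose image g(ℝ) is bounded, and let μ be an interior point of the image g(ℝ). Then there exist real numbers R⁺ > μ and R⁻ < μ and sequences (x_m⁺) and (x_m⁻) of real numbers such that: g'(x_m⁺) ≠ 0 and g'(x_m⁻) ≠ 0 for every m; g'(x_m⁺) → 0 and g'(x_m⁻) → 0 as m → ∞; and g(x_m⁺) → R⁺ and g(x_m⁻) → R⁻ as m → ∞. -/

import Mathlib

open Filter Topology

/-!
On a proper metric space, adding the penalty `-ε * dist x x₀` to a continuous function that is
bounded above makes it attain its maximum. The triangle inequality turns this into a point `y`, at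
least as high as `x₀`, from which the function grows with slope at most `ε`; so `‖g'(y)‖ ≤ ε`.

If `g'(y) = 0`, one has to move to a nearby point with nonzero derivative, and a flat piece of `g`
may be in the way. Since `g` is not constant, such a piece ends at some `z`, where `g z = g y` and
`g' z = 0`, but `g'` does not vanish identically near `z`. By Darboux's theorem `g'` then takes
arbitrarily small nonzero values arbitrarily close to `z`.
-/

open Set

section Ekeland

theorem exists_le_and_forall_le_add_mul_dist {X : Type*} [PseudoMetricSpace X] [ProperSpace X]
    {f : X → ℝ} (hf : Continuous f) (hbdd : BddAbove (range f)) {ε : ℝ} (hε : 0 < ε) (x₀ : X) :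
    ∃ y, f x₀ ≤ f y ∧ ∀ x, f x ≤ f y + ε * dist x y := by
  obtain ⟨M, hM⟩ := hbdd
  have hpenalty : Tendsto (fun x ↦ ε * dist x x₀) (cocompact X) atTop :=
    (tendsto_dist_right_cocompact_atTop x₀).const_mul_atTop hε
  have hfar : ∀ᶠ x in cocompact X, f x - ε * dist x x₀ ≤ f x₀ - ε * dist x₀ x₀ := by
    filter_upwards [hpenalty.eventually_ge_atTop (M - f x₀)] with x hx
    have := hM (mem_range_self x)
    rw [dist_self]
    linarith
  obtain ⟨y, hy⟩ := Continuous.exists_forall_ge' (by fun_prop) x₀ hfar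
  refine ⟨y, ?_, fun x ↦ ?_⟩
  · have hx₀ := hy x₀
    have : 0 ≤ ε * dist y x₀ := by positivity
    rw [dist_self] at hx₀
    linarith
  · have htri : ε * dist x x₀ ≤ ε * (dist x y + dist y x₀) := by
      gcongr
      exact dist_triangle x y x₀
    linarith [hy x]

variable {E : Type*} [NormedAddCommGroup E] [NormedSpace ℝ E] {f : E → ℝ}

theorem fderiv_apply_le_of_eventually_le_add_mul_dist {y : E} {C : ℝ}
    (hf : DifferentiableAt ℝ f y) (hle : ∀ᶠ x in 𝓝 y, f x ≤ f y + C * dist x y) (v : E) :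
    fderiv ℝ f y v ≤ C * ‖v‖ := by
  have hline : Tendsto (fun t : ℝ ↦ y + t • v) (𝓝[>] 0) (𝓝 y) := by
    have : ContinuousAt (fun t : ℝ ↦ y + t • v) 0 := by fun_prop
    simpa using this.tendsto.mono_left nhdsWithin_le_nhds
  refine le_of_tendsto (hf.hasFDerivAt.hasLineDerivAt v).tendsto_slope_zero_right ?_
  filter_upwards [hline.eventually hle, self_mem_nhdsWithin] with t ht (ht₀ : 0 < t)
  rw [dist_self_add_left, norm_smul, Real.norm_of_nonneg ht₀.le] at ht
  rw [smul_eq_mul, inv_mul_le_iff₀ ht₀]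
  linarith

theorem norm_fderiv_le_of_eventually_le_add_mul_dist {y : E} {C : ℝ} (hC : 0 ≤ C)
    (hf : DifferentiableAt ℝ f y) (hle : ∀ᶠ x in 𝓝 y, f x ≤ f y + C * dist x y) :
    ‖fderiv ℝ f y‖ ≤ C := by
  refine ContinuousLinearMap.opNorm_le_bound _ hC fun v ↦ abs_le'.2 ⟨?_, ?_⟩
  · exact fderiv_apply_le_of_eventually_le_add_mul_dist hf hle v
  · simpa using fderiv_apply_le_of_eventually_le_add_mul_dist hf hle (-v)

theorem exists_le_and_norm_fderiv_le [ProperSpace E] (hf : Differentiable ℝ f)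
    (hbdd : BddAbove (range f)) {ε : ℝ} (hε : 0 < ε) (x₀ : E) :
    ∃ y, f x₀ ≤ f y ∧ ‖fderiv ℝ f y‖ ≤ ε := by
  obtain ⟨y, hy, hle⟩ := exists_le_and_forall_le_add_mul_dist hf.continuous hbdd hε x₀
  exact ⟨y, hy, norm_fderiv_le_of_eventually_le_add_mul_dist hε.le (hf y) (.of_forall hle)⟩

end Ekeland

section CriticalPoints

variable {F : Type*} [NormedAddCommGroup F] [NormedSpace ℝ F]

theorem eventually_eq_of_eventually_hasDerivAt_zero {f : ℝ → F} {z : ℝ}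
    (hf : ∀ᶠ x in 𝓝 z, HasDerivAt f 0 x) : ∀ᶠ x in 𝓝 z, f x = f z := by
  obtain ⟨r, hr, hball⟩ := Metric.eventually_nhds_iff_ball.1 hf
  filter_upwards [Metric.ball_mem_nhds z hr] with x hx
  exact Metric.isOpen_ball.is_const_of_deriv_eq_zero (convex_ball z r).isPreconnected
    (fun w hw ↦ (hball w hw).differentiableAt.differentiableWithinAt)
    (fun w hw ↦ (hball w hw).deriv) hx (Metric.mem_ball_self hr)

theorem frequently_deriv_ne_zero_of_notMem_interior {f : ℝ → F} (hf : Differentiable ℝ f) {z : ℝ}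
    (hz : z ∉ interior (f ⁻¹' {f z})) : ∃ᶠ x in 𝓝 z, deriv f x ≠ 0 := by
  contrapose! hz
  have hzero : ∀ᶠ x in 𝓝 z, HasDerivAt f 0 x := hz.mono fun x hx ↦ hx ▸ (hf x).hasDerivAt
  exact mem_interior_iff_mem_nhds.2 (eventually_eq_of_eventually_hasDerivAt_zero hzero)

theorem exists_eq_and_deriv_eq_zero_and_frequently_deriv_ne_zero {f : ℝ → F}
    (hf : Differentiable ℝ f) (hne : (range f).Nontrivial) {y : ℝ} (hy : deriv f y = 0) :
    ∃ z, f z = f y ∧ deriv f z = 0 ∧ ∃ᶠ x in 𝓝 z, deriv f x ≠ 0 := by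
  let W := interior (f ⁻¹' {f y})
  have hW_level : W ⊆ f ⁻¹' {f y} := interior_subset
  by_cases hyW : y ∈ W
  · have hW_ne_univ : W ≠ univ := by
      intro hW_univ
      obtain ⟨_, ⟨x, rfl⟩, hx⟩ := hne.exists_ne (f y)
      exact hx (hW_level (hW_univ.ge (mem_univ x)))
    obtain ⟨z, hz⟩ := nonempty_frontier_iff.2 ⟨⟨y, hyW⟩, hW_ne_univ⟩
    have hzW : z ∉ W := (isOpen_interior.frontier_eq.subset hz).2
    have hzy : f z = f y :=
      closure_minimal hW_level (isClosed_singleton.preimage hf.continuous) hz.1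
    have hlevel : ∃ᶠ x in 𝓝[≠] z, f x = f y :=
      frequently_nhdsWithin_iff.2 <| (mem_closure_iff_frequently.1 hz.1).mono
        fun x hxW ↦ ⟨hW_level hxW, ne_of_mem_of_not_mem hxW hzW⟩
    refine ⟨z, hzy, deriv_zero_of_frequently_const hlevel, ?_⟩
    exact frequently_deriv_ne_zero_of_notMem_interior hf (hzy ▸ hzW)
  · exact ⟨y, rfl, hy, frequently_deriv_ne_zero_of_notMem_interior hf hyW⟩

theorem frequently_deriv_ne_zero_and_abs_deriv_lt {f : ℝ → ℝ} {z : ℝ}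
    (hf : ∀ᶠ x in 𝓝 z, DifferentiableAt ℝ f x) (hz : deriv f z = 0)
    (hne : ∃ᶠ x in 𝓝 z, deriv f x ≠ 0) {ε : ℝ} (hε : 0 < ε) :
    ∃ᶠ x in 𝓝 z, deriv f x ≠ 0 ∧ |deriv f x| < ε := by
  rw [Metric.nhds_basis_ball.frequently_iff]
  intro r hr
  obtain ⟨δ, hδ, hdiff⟩ := Metric.eventually_nhds_iff_ball.1 hf
  set B := Metric.ball z (min r δ)
  have hzB : z ∈ B := Metric.mem_ball_self (lt_min hr hδ)
  obtain ⟨w, hwB, hw⟩ := Metric.nhds_basis_ball.frequently_iff.1 hne _ (lt_min hr hδ)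
  have hconvex : Convex ℝ (deriv f '' B) := (convex_ball z _).image_deriv fun x hx ↦
    hdiff x (Metric.ball_subset_ball (min_le_right _ _) hx)
  have hstar : StarConvex ℝ 0 (deriv f '' B) := hconvex.starConvex ⟨z, hzB, hz⟩
  have hsmall : ∀ᶠ t : ℝ in 𝓝[>] 0, |t * deriv f w| < ε := by
    have : ContinuousAt (fun t : ℝ ↦ |t * deriv f w|) 0 := by fun_prop
    exact (this.eventually_lt_const (by simpa using hε)).filter_mono nhdsWithin_le_nhds
  obtain ⟨t, htε, ht₀, ht₁⟩ := (hsmall.and (Ioo_mem_nhdsGT one_pos)).exists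
  obtain ⟨x, hxB, hx⟩ := hstar.smul_mem ⟨w, hwB, rfl⟩ ht₀.le ht₁.le
  rw [smul_eq_mul] at hx
  exact ⟨x, Metric.ball_subset_ball (min_le_left _ _) hxB,
    hx ▸ mul_ne_zero ht₀.ne' hw, hx ▸ htε⟩

end CriticalPoints

section AlmostCritical

variable {g : ℝ → ℝ} {S : ℝ}

theorem exists_deriv_ne_zero_and_abs_deriv_lt_and_lt (hg : Differentiable ℝ g)
    (hbdd : BddAbove (range g)) (hne : (range g).Nontrivial) {ε a x₀ : ℝ} (hε : 0 < ε)
    (ha : a < g x₀) : ∃ x, deriv g x ≠ 0 ∧ |deriv g x| < ε ∧ a < g x := by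
  obtain ⟨y, hy, hyε⟩ := exists_le_and_norm_fderiv_le hg hbdd (half_pos hε) x₀
  rw [← norm_deriv_eq_norm_fderiv, Real.norm_eq_abs] at hyε
  by_cases hy₀ : deriv g y = 0
  · obtain ⟨z, hzy, hz, hzne⟩ :=
      exists_eq_and_deriv_eq_zero_and_frequently_deriv_ne_zero hg hne hy₀
    have hhigh : ∀ᶠ x in 𝓝 z, a < g x :=
      hg.continuous.continuousAt.eventually_const_lt (by linarith)
    have hsmall := frequently_deriv_ne_zero_and_abs_deriv_lt (.of_forall hg) hz hzne hε
    obtain ⟨x, ⟨hx₀, hxε⟩, hxa⟩ := (hsmall.and_eventually hhigh).exists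
    exact ⟨x, hx₀, hxε, hxa⟩
  · exact ⟨y, hy₀, by linarith, by linarith⟩

theorem exists_seq_deriv_tendsto_zero_of_isLUB (hg : Differentiable ℝ g)
    (hne : (range g).Nontrivial) (hS : IsLUB (range g) S) :
    ∃ x : ℕ → ℝ, (∀ m, deriv g (x m) ≠ 0) ∧ Tendsto (fun m ↦ deriv g (x m)) atTop (𝓝 0) ∧
      Tendsto (fun m ↦ g (x m)) atTop (𝓝 S) := by
  have happrox : ∀ m : ℕ, ∃ x, deriv g x ≠ 0 ∧ |deriv g x| < 1 / ((m : ℝ) + 1) ∧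
      S - 1 / ((m : ℝ) + 1) < g x := by
    intro m
    have hm : 0 < 1 / ((m : ℝ) + 1) := Nat.one_div_pos_of_nat
    obtain ⟨_, ⟨x₀, rfl⟩, hx₀, -⟩ := hS.exists_between (sub_lt_self S hm)
    exact exists_deriv_ne_zero_and_abs_deriv_lt_and_lt hg hS.bddAbove hne hm hx₀
  choose x hx₀ hx_small hx_high using happrox
  have hlim := tendsto_one_div_add_atTop_nhds_zero_nat (𝕜 := ℝ)
  refine ⟨x, hx₀, squeeze_zero_norm (fun m ↦ (hx_small m).le) hlim, ?_⟩
  exact tendsto_of_tendsto_of_tendsto_of_le_of_le (by simpa using hlim.const_sub S)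
    tendsto_const_nhds (fun m ↦ (hx_high m).le) fun m ↦ hS.1 (mem_range_self (x m))

theorem exists_seq_deriv_tendsto_zero_of_isGLB (hg : Differentiable ℝ g)
    (hne : (range g).Nontrivial) (hS : IsGLB (range g) S) :
    ∃ x : ℕ → ℝ, (∀ m, deriv g (x m) ≠ 0) ∧ Tendsto (fun m ↦ deriv g (x m)) atTop (𝓝 0) ∧
      Tendsto (fun m ↦ g (x m)) atTop (𝓝 S) := by
  have hrange : range (-g) = -range g := by
    rw [← image_neg_eq_neg, ← range_comp]
    rfl
  have hne' : (range (-g)).Nontrivial := by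
    rw [hrange, ← image_neg_eq_neg]
    exact hne.image neg_injective
  have hS' : IsLUB (range (-g)) (-S) := hrange ▸ hS.neg
  obtain ⟨x, hx₀, hx_deriv, hx⟩ := exists_seq_deriv_tendsto_zero_of_isLUB hg.neg hne' hS'
  simp only [deriv.neg, Pi.neg_apply] at hx₀ hx_deriv hx
  exact ⟨x, fun m ↦ neg_ne_zero.1 (hx₀ m), by simpa using hx_deriv.neg, by simpa using hx.neg⟩

end AlmostCritical

theorem stmt0_general (g : ℝ → ℝ) (hg : Differentiable ℝ g)
    (hbdd : Bornology.IsBounded (range g)) (μ : ℝ) (hμ : μ ∈ interior (range g)) :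
    ∃ (Rp Rm : ℝ) (xp xm : ℕ → ℝ),
      μ < Rp ∧ Rm < μ ∧
      (∀ m, deriv g (xp m) ≠ 0) ∧ (∀ m, deriv g (xm m) ≠ 0) ∧
      Tendsto (fun m ↦ deriv g (xp m)) atTop (𝓝 0) ∧
      Tendsto (fun m ↦ deriv g (xm m)) atTop (𝓝 0) ∧
      Tendsto (fun m ↦ g (xp m)) atTop (𝓝 Rp) ∧
      Tendsto (fun m ↦ g (xm m)) atTop (𝓝 Rm) := by
  have hsup := isLUB_csSup (range_nonempty g) hbdd.bddAbove
  have hinf := isGLB_csInf (range_nonempty g) hbdd.bddBelow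
  have hrange : range g ⊆ Icc (sInf (range g)) (sSup (range g)) :=
    fun _ hx ↦ ⟨hinf.1 hx, hsup.1 hx⟩
  obtain ⟨hinf_lt, hlt_sup⟩ := interior_Icc.subset (interior_mono hrange hμ)
  have hne : (range g).Nontrivial :=
    (infinite_of_mem_nhds μ (mem_interior_iff_mem_nhds.1 hμ)).nontrivial
  obtain ⟨xp, hxp₀, hxp_deriv, hxp⟩ := exists_seq_deriv_tendsto_zero_of_isLUB hg hne hsup
  obtain ⟨xm, hxm₀, hxm_deriv, hxm⟩ := exists_seq_deriv_tendsto_zero_of_isGLB hg hne hinf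
  exact ⟨_, _, xp, xm, hlt_sup, hinf_lt, hxp₀, hxm₀, hxp_deriv, hxm_deriv, hxp, hxm⟩

/-- If `g : ℝ → ℝ` is a smooth Morse function with bounded image and `μ` is an interior
point of the image, then there are almost-critical sequences `xp`, `xm` with
`g (xp m) → R⁺ > μ` and `g (xm m) → R⁻ < μ`, `deriv g` nonzero along them and tending to 0. -/
theorem stmt0 (g : ℝ → ℝ) (hg : ContDiff ℝ (⊤ : ℕ∞) g)
    (hmorse : ∀ x, deriv g x = 0 → deriv (deriv g) x ≠ 0)
    (hbdd : Bornology.IsBounded (Set.range g))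
    (μ : ℝ) (hμ : μ ∈ interior (Set.range g)) :
    ∃ (Rp Rm : ℝ) (xp xm : ℕ → ℝ),
      μ < Rp ∧ Rm < μ ∧
      (∀ m, deriv g (xp m) ≠ 0) ∧ (∀ m, deriv g (xm m) ≠ 0) ∧
      Tendsto (fun m => deriv g (xp m)) atTop (𝓝 0) ∧
      Tendsto (fun m => deriv g (xm m)) atTop (𝓝 0) ∧
      Tendsto (fun m => g (xp m)) atTop (𝓝 Rp) ∧
      Tendsto (fun m => g (xm m)) atTop (𝓝 Rm) := by
  exact stmt0_general g (hg.differentiable (by simp)) hbdd μ hμ
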